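/- Let F be a field with char F ∉ {2, 3}. In the Highwater algebra H over F, let E_μ = {x ∈ H : a_0·x = μx} denote the μ-eigenspace of left multiplication by a_0. Then the eigenspaces satisfy the fusion law M(2, 1/2): E_1·E_1 ⊆ E_1, E_1·E_0 = 0, E_1·E_2 ⊆ E_2, E_1·E_{1/2} ⊆ E_{1/2}, E_0·E_0 ⊆ E_0, E_0·E_2 ⊆ E_2, E_0·E_{1/2} ⊆ E_{1/2}, E_2·E_2 ⊆ E_1 + E_0, E_2·E_{1/2} ⊆ E_{1/2}, and E_{1/2}·E_{1/2} ⊆ E_1 + E_0 + E_2. -/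

import Mathlib

/- STATEMENT 4: the eigenspaces of ad(a_0) on the Highwater algebra satisfy the\nfusion law M(2, 1/2). -/

/-- The underlying vector space of the Highwater algebra: formal `F`-linear combinations
of basis elements `a_i` (`i : ℤ`, encoded `Sum.inl i`) and `s_j` (`j ≥ 1`, encoded
`Sum.inr (j - 1)`). -/
abbrev HW (F : Type*) [Field F] := (ℤ ⊕ ℕ) →₀ F

variable (F : Type*) [Field F]

/-- The axis `a_i` of the Highwater algebra. -/
noncomputable def hwa (i : ℤ) : HW F := Finsupp.single (Sum.inl i) 1

/-- The element `s_j` of the Highwater algebra (`s_0 = 0`). -/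
noncomputable def hws : ℕ → HW F
  | 0 => 0
  | j + 1 => Finsupp.single (Sum.inr j) 1

/-- Product of two basis elements of the Highwater algebra:
`a_i · a_k = (1/2)(a_i + a_k) + s_{|i-k|}`,
`a_i · s_j = -(3/4) a_i + (3/8)(a_{i-j} + a_{i+j}) + (3/2) s_j`,
`s_j · s_k = (3/4)(s_j + s_k) - (3/8)(s_{|j-k|} + s_{j+k})`. -/
noncomputable def hwBM : ℤ ⊕ ℕ → ℤ ⊕ ℕ → HW F
  | Sum.inl i, Sum.inl k => ((1 : F) / 2) • (hwa F i + hwa F k) + hws F (i - k).natAbs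
  | Sum.inl i, Sum.inr j =>
      (-(3 : F) / 4) • hwa F i
        + ((3 : F) / 8) • (hwa F (i - ((j : ℤ) + 1)) + hwa F (i + ((j : ℤ) + 1)))
        + ((3 : F) / 2) • hws F (j + 1)
  | Sum.inr j, Sum.inl i =>
      (-(3 : F) / 4) • hwa F i
        + ((3 : F) / 8) • (hwa F (i - ((j : ℤ) + 1)) + hwa F (i + ((j : ℤ) + 1)))
        + ((3 : F) / 2) • hws F (j + 1)
  | Sum.inr j, Sum.inr k =>
      ((3 : F) / 4) • (hws F (j + 1) + hws F (k + 1))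
        - ((3 : F) / 8) • (hws F ((j : ℤ) - (k : ℤ)).natAbs + hws F (j + k + 2))

/-- The multiplication of the Highwater algebra: the bilinear extension of `hwBM`. -/
noncomputable def hwMul (x y : HW F) : HW F :=
  x.sum fun i ci => y.sum fun j cj => (ci * cj) • hwBM F i j

lemma hwMul_zero (x : HW F) : hwMul F x 0 = 0 := by
  unfold hwMul
  simp

lemma hwMul_add (x y z : HW F) : hwMul F x (y + z) = hwMul F x y + hwMul F x z := by
  unfold hwMul
  rw [← Finsupp.sum_add]
  refine Finsupp.sum_congr fun i _ => ?_
  exact Finsupp.sum_add_index' (fun j => by simp) (fun j c1 c2 => by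
    rw [mul_add, add_smul])

lemma hwMul_smul (c : F) (x y : HW F) : hwMul F x (c • y) = c • hwMul F x y := by
  unfold hwMul
  rw [Finsupp.smul_sum]
  refine Finsupp.sum_congr fun i _ => ?_
  rw [Finsupp.sum_smul_index' (fun j => by simp), Finsupp.smul_sum]
  exact Finsupp.sum_congr fun j _ => by
    rw [smul_eq_mul, smul_smul, mul_left_comm]

/-- The `μ`-eigenspace of the left multiplication operator by `a_0` on the
Highwater algebra. -/
noncomputable def hwEig (μ : F) : Submodule F (HW F) where
  carrier := {x | hwMul F (hwa F 0) x = μ • x}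
  zero_mem' := by simp [hwMul_zero]
  add_mem' := fun hx hy => by
    simp only [Set.mem_setOf_eq] at *
    rw [hwMul_add, hx, hy, smul_add]
  smul_mem' := fun c x hx => by
    simp only [Set.mem_setOf_eq] at *
    rw [hwMul_smul, hx, smul_smul, smul_smul, mul_comm]

/-- The multiplication of the Highwater algebra as a bilinear map. -/
noncomputable def hwMulBilin : HW F →ₗ[F] HW F →ₗ[F] HW F :=
  LinearMap.mk₂ F (hwMul F)
    (fun x y z => by
      unfold hwMul
      exact Finsupp.sum_add_index' (fun i => by simp) fun i c d => by
        rw [← Finsupp.sum_add]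
        exact Finsupp.sum_congr fun j _ => by rw [add_mul, add_smul])
    (fun c x y => by
      unfold hwMul
      rw [Finsupp.smul_sum, Finsupp.sum_smul_index' (fun i => by simp)]
      refine Finsupp.sum_congr fun i _ => ?_
      rw [Finsupp.smul_sum]
      exact Finsupp.sum_congr fun j _ => by rw [smul_eq_mul, smul_smul, mul_assoc])
    (hwMul_add F)
    (fun c x y => hwMul_smul F c x y)

lemma hwMulBilin_apply (x y : HW F) : hwMulBilin F x y = hwMul F x y := rfl

lemma hwMulBilin_single (i j : ℤ ⊕ ℕ) :
    hwMulBilin F (Finsupp.single i 1) (Finsupp.single j 1) = hwBM F i j := by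
  simp [hwMulBilin_apply, hwMul]

lemma hwEig_eq_eigenspace (μ : F) :
    hwEig F μ = Module.End.eigenspace (hwMulBilin F (hwa F 0)) μ := by
  ext x
  rw [Module.End.mem_eigenspace_iff]
  rfl

/-- The elements `s_j`, extended to all integers by `s_{-j} = s_j`. -/
noncomputable def hwsInt (j : ℤ) : HW F := hws F j.natAbs

lemma hwsInt_zero : hwsInt F 0 = 0 := rfl

lemma hwsInt_neg (j : ℤ) : hwsInt F (-j) = hwsInt F j := by
  rw [hwsInt, Int.natAbs_neg, hwsInt]

lemma hwsInt_sub_comm (i j : ℤ) : hwsInt F (i - j) = hwsInt F (j - i) := by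
  rw [← hwsInt_neg, neg_sub]

lemma hwsInt_natCast_add_one (n : ℕ) :
    hwsInt F ((n : ℤ) + 1) = Finsupp.single (Sum.inr n) 1 := rfl

lemma hwa_mul_hwa (i j : ℤ) :
    hwMulBilin F (hwa F i) (hwa F j)
      = ((1 : F) / 2) • (hwa F i + hwa F j) + hwsInt F (i - j) :=
  hwMulBilin_single F _ _

/-- Every integer is zero, a successor, or the negative of a successor. -/
lemma int_eq_zero_or_succ_or_neg_succ (j : ℤ) :
    j = 0 ∨ ∃ n : ℕ, j = (n : ℤ) + 1 ∨ j = -((n : ℤ) + 1) := by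
  rcases lt_trichotomy j 0 with h | h | h
  · exact Or.inr ⟨(-j - 1).toNat, by omega⟩
  · exact Or.inl h
  · exact Or.inr ⟨(j - 1).toNat, by omega⟩

section

variable {F}

lemma four_ne_zero_and_eight_ne_zero (h2 : (2 : F) ≠ 0) : (4 : F) ≠ 0 ∧ (8 : F) ≠ 0 :=
  ⟨by convert pow_ne_zero 2 h2 using 1; norm_num, by convert pow_ne_zero 3 h2 using 1; norm_num⟩

lemma hwa_mul_hwsInt (h2 : (2 : F) ≠ 0) (i j : ℤ) :
    hwMulBilin F (hwa F i) (hwsInt F j)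
      = (-(3 : F) / 4) • hwa F i + ((3 : F) / 8) • (hwa F (i - j) + hwa F (i + j))
        + ((3 : F) / 2) • hwsInt F j := by
  obtain ⟨h4, h8⟩ := four_ne_zero_and_eight_ne_zero h2
  have key (n : ℕ) := hwMulBilin_single F (Sum.inl i) (Sum.inr n)
  rcases int_eq_zero_or_succ_or_neg_succ j with rfl | ⟨n, rfl | rfl⟩
  · simp only [hwsInt_zero, map_zero, sub_zero, add_zero]
    match_scalars
    field_simp
    ring
  · exact key n
  · rw [hwsInt_neg, sub_neg_eq_add, ← sub_eq_add_neg, add_comm (hwa F (i + _))]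
    exact key n

lemma hwsInt_mul_hwa (h2 : (2 : F) ≠ 0) (i j : ℤ) :
    hwMulBilin F (hwsInt F j) (hwa F i)
      = (-(3 : F) / 4) • hwa F i + ((3 : F) / 8) • (hwa F (i - j) + hwa F (i + j))
        + ((3 : F) / 2) • hwsInt F j := by
  rw [← hwa_mul_hwsInt h2]
  have key (n : ℕ) : hwMulBilin F (hwsInt F ((n : ℤ) + 1)) (hwa F i)
      = hwMulBilin F (hwa F i) (hwsInt F ((n : ℤ) + 1)) :=
    (hwMulBilin_single F (Sum.inr n) (Sum.inl i)).trans
      (hwMulBilin_single F (Sum.inl i) (Sum.inr n)).symm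
  rcases int_eq_zero_or_succ_or_neg_succ j with rfl | ⟨n, rfl | rfl⟩
  · simp [hwsInt_zero]
  · exact key n
  · rw [hwsInt_neg]
    exact key n

lemma hwsInt_mul_hwsInt (h2 : (2 : F) ≠ 0) (j k : ℤ) :
    hwMulBilin F (hwsInt F j) (hwsInt F k)
      = ((3 : F) / 4) • (hwsInt F j + hwsInt F k)
        - ((3 : F) / 8) • (hwsInt F (j - k) + hwsInt F (j + k)) := by
  obtain ⟨h4, h8⟩ := four_ne_zero_and_eight_ne_zero h2
  have key (m n : ℕ) : hwMulBilin F (hwsInt F ((m : ℤ) + 1)) (hwsInt F ((n : ℤ) + 1))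
      = ((3 : F) / 4) • (hwsInt F ((m : ℤ) + 1) + hwsInt F ((n : ℤ) + 1))
        - ((3 : F) / 8) • (hwsInt F (((m : ℤ) + 1) - ((n : ℤ) + 1))
          + hwsInt F (((m : ℤ) + 1) + ((n : ℤ) + 1))) := by
    rw [add_sub_add_right_eq_sub, add_add_add_comm]
    exact hwMulBilin_single F (Sum.inr m) (Sum.inr n)
  have key_left (m : ℕ) (k : ℤ) : hwMulBilin F (hwsInt F ((m : ℤ) + 1)) (hwsInt F k)
      = ((3 : F) / 4) • (hwsInt F ((m : ℤ) + 1) + hwsInt F k)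
        - ((3 : F) / 8) • (hwsInt F (((m : ℤ) + 1) - k) + hwsInt F (((m : ℤ) + 1) + k)) := by
    rcases int_eq_zero_or_succ_or_neg_succ k with rfl | ⟨n, rfl | rfl⟩
    · simp only [hwsInt_zero, map_zero, sub_zero, add_zero]
      match_scalars
      field_simp
      ring
    · exact key m n
    · rw [hwsInt_neg, sub_neg_eq_add, ← sub_eq_add_neg, add_comm (hwsInt F (_ + (_ + _)))]
      exact key m n
  rcases int_eq_zero_or_succ_or_neg_succ j with rfl | ⟨m, rfl | rfl⟩
  · simp only [hwsInt_zero, map_zero, LinearMap.zero_apply, zero_sub, zero_add, hwsInt_neg]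
    match_scalars
    field_simp
    ring
  · exact key_left m k
  · rw [hwsInt_neg, key_left, ← neg_add', hwsInt_neg, neg_add_eq_sub, hwsInt_sub_comm F k,
      add_comm (hwsInt F (_ + k))]

end

/-- The `0`-eigenvector `-6 a_0 + 3 (a_j + a_{-j}) - 4 s_j` of `a_0`. -/
noncomputable def hwZeroVec (j : ℤ) : HW F :=
  (-6 : F) • hwa F 0 + (3 : F) • (hwa F j + hwa F (-j)) - (4 : F) • hwsInt F j

/-- The `2`-eigenvector `-2 a_0 + (a_j + a_{-j}) + 4 s_j` of `a_0`. -/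
noncomputable def hwTwoVec (j : ℤ) : HW F :=
  (-2 : F) • hwa F 0 + (hwa F j + hwa F (-j)) + (4 : F) • hwsInt F j

/-- The `1/2`-eigenvector `a_j - a_{-j}` of `a_0`. -/
noncomputable def hwHalfVec (j : ℤ) : HW F := hwa F j - hwa F (-j)

section

variable {F}

lemma hwZeroVec_mem_hwEig (h2 : (2 : F) ≠ 0) (j : ℤ) :
    hwZeroVec F j ∈ hwEig F 0 := by
  obtain ⟨h4, h8⟩ := four_ne_zero_and_eight_ne_zero h2
  change hwMulBilin F (hwa F 0) (hwZeroVec F j) = (0 : F) • hwZeroVec F j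
  simp only [hwZeroVec, map_add, map_sub, map_smul, hwa_mul_hwa, hwa_mul_hwsInt h2, hwsInt_zero,
    sub_zero, zero_sub, zero_add, sub_neg_eq_add, hwsInt_neg]
  match_scalars <;> field_simp <;> ring

lemma hwTwoVec_mem_hwEig (h2 : (2 : F) ≠ 0) (j : ℤ) :
    hwTwoVec F j ∈ hwEig F 2 := by
  obtain ⟨h4, h8⟩ := four_ne_zero_and_eight_ne_zero h2
  change hwMulBilin F (hwa F 0) (hwTwoVec F j) = (2 : F) • hwTwoVec F j
  simp only [hwTwoVec, map_add, map_smul, hwa_mul_hwa, hwa_mul_hwsInt h2, hwsInt_zero, sub_zero,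
    zero_sub, zero_add, sub_neg_eq_add, hwsInt_neg]
  match_scalars <;> field_simp <;> ring

lemma hwHalfVec_mem_hwEig (h2 : (2 : F) ≠ 0) (j : ℤ) :
    hwHalfVec F j ∈ hwEig F (2 : F)⁻¹ := by
  change hwMulBilin F (hwa F 0) (hwHalfVec F j) = (2 : F)⁻¹ • hwHalfVec F j
  simp only [hwHalfVec, map_sub, hwa_mul_hwa, zero_sub, zero_add, sub_neg_eq_add, hwsInt_neg]
  match_scalars <;> field_simp <;> ring

lemma hwZeroVec_mul_hwZeroVec (h2 : (2 : F) ≠ 0) (j k : ℤ) :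
    hwMulBilin F (hwZeroVec F j) (hwZeroVec F k)
      = (6 : F) • (hwZeroVec F j + hwZeroVec F k)
        + (-3 : F) • (hwZeroVec F (j - k) + hwZeroVec F (j + k)) := by
  obtain ⟨h4, h8⟩ := four_ne_zero_and_eight_ne_zero h2
  simp only [hwZeroVec, map_add, map_sub, map_smul, LinearMap.add_apply, LinearMap.sub_apply,
    LinearMap.smul_apply, hwa_mul_hwa, hwa_mul_hwsInt h2, hwsInt_mul_hwa h2,
    hwsInt_mul_hwsInt h2, hwsInt_zero, sub_zero, zero_sub, zero_add, sub_neg_eq_add,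
    neg_add_eq_sub, neg_sub, neg_add', hwsInt_neg]
  simp only [add_comm k j, show -k - j = -j - k by ring, hwsInt_sub_comm F k j,
    show hwsInt F (-j - k) = hwsInt F (j + k) by rw [← hwsInt_neg]; ring_nf]
  match_scalars <;> field_simp <;> ring

lemma hwZeroVec_mul_hwTwoVec (h2 : (2 : F) ≠ 0) (j k : ℤ) :
    hwMulBilin F (hwZeroVec F j) (hwTwoVec F k)
      = (-6 : F) • (hwTwoVec F j + hwTwoVec F k)
        + (3 : F) • (hwTwoVec F (j - k) + hwTwoVec F (j + k)) := by
  obtain ⟨h4, h8⟩ := four_ne_zero_and_eight_ne_zero h2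
  simp only [hwZeroVec, hwTwoVec, map_add, map_sub, map_smul, LinearMap.add_apply,
    LinearMap.sub_apply, LinearMap.smul_apply, hwa_mul_hwa, hwa_mul_hwsInt h2, hwsInt_mul_hwa h2,
    hwsInt_mul_hwsInt h2, hwsInt_zero, sub_zero, zero_sub, zero_add, sub_neg_eq_add,
    neg_add_eq_sub, neg_sub, neg_add', hwsInt_neg]
  simp only [add_comm k j, show -k - j = -j - k by ring, hwsInt_sub_comm F k j,
    show hwsInt F (-j - k) = hwsInt F (j + k) by rw [← hwsInt_neg]; ring_nf]
  match_scalars <;> field_simp <;> ring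

lemma hwTwoVec_mul_hwTwoVec (h2 : (2 : F) ≠ 0) (j k : ℤ) :
    hwMulBilin F (hwTwoVec F j) (hwTwoVec F k)
      = (-2 : F) • (hwZeroVec F j + hwZeroVec F k) + (hwZeroVec F (j - k) + hwZeroVec F (j + k)) := by
  obtain ⟨h4, h8⟩ := four_ne_zero_and_eight_ne_zero h2
  simp only [hwZeroVec, hwTwoVec, map_add, map_smul, LinearMap.add_apply, LinearMap.smul_apply,
    hwa_mul_hwa, hwa_mul_hwsInt h2, hwsInt_mul_hwa h2, hwsInt_mul_hwsInt h2, hwsInt_zero,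
    sub_zero, zero_sub, zero_add, sub_neg_eq_add, neg_add_eq_sub, neg_sub, neg_add', hwsInt_neg]
  simp only [add_comm k j, show -k - j = -j - k by ring, hwsInt_sub_comm F k j,
    show hwsInt F (-j - k) = hwsInt F (j + k) by rw [← hwsInt_neg]; ring_nf]
  match_scalars <;> field_simp <;> ring

lemma hwZeroVec_mul_hwHalfVec (h2 : (2 : F) ≠ 0) (j k : ℤ) :
    hwMulBilin F (hwZeroVec F j) (hwHalfVec F k)
      = (3 : F) • hwHalfVec F k - ((3 : F) / 2) • (hwHalfVec F (k - j) + hwHalfVec F (j + k)) := by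
  obtain ⟨h4, h8⟩ := four_ne_zero_and_eight_ne_zero h2
  simp only [hwZeroVec, hwHalfVec, map_add, map_sub, map_smul, LinearMap.add_apply,
    LinearMap.sub_apply, LinearMap.smul_apply, hwa_mul_hwa, hwsInt_mul_hwa h2, zero_sub,
    zero_add, sub_neg_eq_add, neg_add_eq_sub, neg_sub, neg_add', hwsInt_neg]
  simp only [add_comm k j, show -k - j = -j - k by ring, hwsInt_sub_comm F k j,
    show hwsInt F (-j - k) = hwsInt F (j + k) by rw [← hwsInt_neg]; ring_nf]
  match_scalars <;> field_simp <;> ring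

lemma hwTwoVec_mul_hwHalfVec (h2 : (2 : F) ≠ 0) (j k : ℤ) :
    hwMulBilin F (hwTwoVec F j) (hwHalfVec F k)
      = (-3 : F) • hwHalfVec F k + ((3 : F) / 2) • (hwHalfVec F (k - j) + hwHalfVec F (j + k)) := by
  obtain ⟨h4, h8⟩ := four_ne_zero_and_eight_ne_zero h2
  simp only [hwTwoVec, hwHalfVec, map_add, map_sub, map_smul, LinearMap.add_apply,
    LinearMap.smul_apply, hwa_mul_hwa, hwsInt_mul_hwa h2, zero_sub, zero_add, sub_neg_eq_add,
    neg_add_eq_sub, neg_sub, neg_add', hwsInt_neg]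
  simp only [add_comm k j, show -k - j = -j - k by ring, hwsInt_sub_comm F k j,
    show hwsInt F (-j - k) = hwsInt F (j + k) by rw [← hwsInt_neg]; ring_nf]
  match_scalars <;> field_simp <;> ring

lemma hwHalfVec_mul_hwHalfVec (h2 : (2 : F) ≠ 0) (j k : ℤ) :
    hwMulBilin F (hwHalfVec F j) (hwHalfVec F k)
      = (2 : F) • (hwsInt F (j - k) - hwsInt F (j + k)) := by
  simp only [hwHalfVec, map_sub, LinearMap.sub_apply, hwa_mul_hwa, sub_neg_eq_add,
    neg_add_eq_sub]
  simp only [hwsInt_sub_comm F k j,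
    show hwsInt F (-j - k) = hwsInt F (j + k) by rw [← hwsInt_neg]; ring_nf]
  match_scalars <;> field_simp <;> ring

lemma hwa_zero_mem_hwEig (h2 : (2 : F) ≠ 0) : hwa F 0 ∈ hwEig F 1 := by
  change hwMulBilin F (hwa F 0) (hwa F 0) = (1 : F) • hwa F 0
  rw [hwa_mul_hwa, sub_zero, hwsInt_zero]
  match_scalars
  field_simp
  norm_num

lemma hwsInt_eq (h2 : (2 : F) ≠ 0) (j : ℤ) :
    hwsInt F j = ((3 : F) / 16) • hwTwoVec F j - ((1 : F) / 16) • hwZeroVec F j := by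
  have h16 : (16 : F) ≠ 0 := by convert pow_ne_zero 4 h2 using 1; norm_num
  simp only [hwZeroVec, hwTwoVec]
  match_scalars <;> field_simp <;> ring

lemma hwa_eq (h2 : (2 : F) ≠ 0) (j : ℤ) :
    hwa F j = hwa F 0 + ((1 : F) / 8) • (hwZeroVec F j + hwTwoVec F j)
      + ((1 : F) / 2) • hwHalfVec F j := by
  have h8 : (8 : F) ≠ 0 := by convert pow_ne_zero 3 h2 using 1; norm_num
  simp only [hwZeroVec, hwTwoVec, hwHalfVec]
  match_scalars <;> field_simp <;> ring

open Submodule in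
/-- The Highwater algebra is spanned by the explicit eigenvectors of `a_0`. -/
lemma span_eigenvectors_eq_top (h2 : (2 : F) ≠ 0) :
    span F {hwa F 0} ⊔ span F (Set.range (hwZeroVec F)) ⊔ span F (Set.range (hwTwoVec F))
      ⊔ span F (Set.range (hwHalfVec F)) = ⊤ := by
  set W := span F {hwa F 0} ⊔ span F (Set.range (hwZeroVec F)) ⊔ span F (Set.range (hwTwoVec F))
    ⊔ span F (Set.range (hwHalfVec F))
  have mem_one : hwa F 0 ∈ W :=
    mem_sup_left (mem_sup_left (mem_sup_left (mem_span_singleton_self _)))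
  have mem_zero (j : ℤ) : hwZeroVec F j ∈ W :=
    mem_sup_left (mem_sup_left (mem_sup_right (subset_span ⟨j, rfl⟩)))
  have mem_two (j : ℤ) : hwTwoVec F j ∈ W := mem_sup_left (mem_sup_right (subset_span ⟨j, rfl⟩))
  have mem_half (j : ℤ) : hwHalfVec F j ∈ W := mem_sup_right (subset_span ⟨j, rfl⟩)
  have mem_single (i : ℤ ⊕ ℕ) : Finsupp.single i (1 : F) ∈ W := by
    rcases i with i | n
    · change hwa F i ∈ W
      rw [hwa_eq h2]
      exact add_mem (add_mem mem_one (smul_mem _ _ (add_mem (mem_zero i) (mem_two i))))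
        (smul_mem _ _ (mem_half i))
    · rw [← hwsInt_natCast_add_one, hwsInt_eq h2]
      exact sub_mem (smul_mem _ _ (mem_two _)) (smul_mem _ _ (mem_zero _))
  refine eq_top_iff'.2 fun x => ?_
  induction x using Finsupp.induction_linear with
  | zero => exact zero_mem _
  | add x y hx hy => exact add_mem hx hy
  | single i c => simpa using smul_mem W c (mem_single i)

/-- If `p` lies in an eigenspace, `q` lies in the sum of the other ones, and `p` and `q` span
everything, then `p` is the whole eigenspace. -/
lemma eigenspace_le_of_sup_eq_top {V : Type*} [AddCommGroup V] [Module F V]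
    (f : Module.End F V) (μ : F) {p q : Submodule F V} (hp : p ≤ f.eigenspace μ)
    (hq : q ≤ ⨆ ν ≠ μ, f.eigenspace ν) (hpq : p ⊔ q = ⊤) : f.eigenspace μ ≤ p := by
  intro x hx
  obtain ⟨y, hy, z, hz, rfl⟩ := Submodule.mem_sup.1 (hpq ▸ Submodule.mem_top : x ∈ p ⊔ q)
  have hz' : z ∈ f.eigenspace μ := by simpa using sub_mem hx (hp hy)
  have hz0 : z = 0 := Submodule.disjoint_def.1 (f.eigenspaces_iSupIndep μ) z hz' (hq hz)
  simpa [hz0] using hy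

open Submodule in
/-- The eigenspaces of `a_0` are spanned by the explicit eigenvectors. -/
lemma hwEig_le_span (h2 : (2 : F) ≠ 0) (h3 : (3 : F) ≠ 0) :
    hwEig F 1 ≤ span F {hwa F 0} ∧ hwEig F 0 ≤ span F (Set.range (hwZeroVec F)) ∧
      hwEig F 2 ≤ span F (Set.range (hwTwoVec F)) ∧
      hwEig F (2 : F)⁻¹ ≤ span F (Set.range (hwHalfVec F)) := by
  have top := span_eigenvectors_eq_top h2
  have le_one : span F {hwa F 0} ≤ hwEig F 1 := by
    simpa using hwa_zero_mem_hwEig h2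
  have le_zero : span F (Set.range (hwZeroVec F)) ≤ hwEig F 0 :=
    span_le.2 (Set.range_subset_iff.2 (hwZeroVec_mem_hwEig h2))
  have le_two : span F (Set.range (hwTwoVec F)) ≤ hwEig F 2 :=
    span_le.2 (Set.range_subset_iff.2 (hwTwoVec_mem_hwEig h2))
  have le_half : span F (Set.range (hwHalfVec F)) ≤ hwEig F (2 : F)⁻¹ :=
    span_le.2 (Set.range_subset_iff.2 (hwHalfVec_mem_hwEig h2))
  have one_ne_two : (1 : F) ≠ 2 := fun h => one_ne_zero (by linear_combination -h : (1 : F) = 0)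
  have half_ne_one : (2 : F)⁻¹ ≠ 1 := fun h => one_ne_two (inv_eq_one.1 h).symm
  have half_ne_zero : (2 : F)⁻¹ ≠ 0 := inv_ne_zero h2
  have half_ne_two : (2 : F)⁻¹ ≠ 2 := fun h =>
    h3 (by linear_combination -2 * h + inv_mul_cancel₀ h2)
  have le_iSup_eig {μ ν : F} {W : Submodule F (HW F)} (hW : W ≤ hwEig F ν) (h : ν ≠ μ) :
      W ≤ ⨆ ν ≠ μ, Module.End.eigenspace (hwMulBilin F (hwa F 0)) ν :=
    (hW.trans (hwEig_eq_eigenspace F ν).le).trans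
      (le_iSup₂ (f := fun ν (_ : ν ≠ μ) => Module.End.eigenspace (hwMulBilin F (hwa F 0)) ν) ν h)
  have of_sup {μ : F} {W₀ W₁ W₂ W₃ : Submodule F (HW F)} (h₀ : W₀ ≤ hwEig F μ) {ν₁ ν₂ ν₃ : F}
      (h₁ : W₁ ≤ hwEig F ν₁) (h₂ : W₂ ≤ hwEig F ν₂) (h₃ : W₃ ≤ hwEig F ν₃)
      (n₁ : ν₁ ≠ μ) (n₂ : ν₂ ≠ μ) (n₃ : ν₃ ≠ μ) (h : W₀ ⊔ (W₁ ⊔ W₂ ⊔ W₃) = ⊤) :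
      hwEig F μ ≤ W₀ := by
    rw [hwEig_eq_eigenspace] at h₀ ⊢
    exact eigenspace_le_of_sup_eq_top _ μ h₀
      (sup_le (sup_le (le_iSup_eig h₁ n₁) (le_iSup_eig h₂ n₂)) (le_iSup_eig h₃ n₃)) h
  refine ⟨of_sup le_one le_zero le_two le_half zero_ne_one one_ne_two.symm half_ne_one ?_,
    of_sup le_zero le_one le_two le_half one_ne_zero h2 half_ne_zero ?_,
    of_sup le_two le_one le_zero le_half one_ne_two h2.symm half_ne_two ?_,
    of_sup le_half le_one le_zero le_two half_ne_one.symm half_ne_zero.symm half_ne_two.symm ?_⟩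
  all_goals rw [← top]; ac_rfl

/-- A bilinear condition on products can be checked on spanning families. -/
lemma hwMul_mem_of_le_span {p q r : Submodule F (HW F)} {f g : ℤ → HW F}
    (hp : p ≤ Submodule.span F (Set.range f)) (hq : q ≤ Submodule.span F (Set.range g))
    (h : ∀ j k, hwMulBilin F (f j) (g k) ∈ r) : ∀ x ∈ p, ∀ y ∈ q, hwMul F x y ∈ r := by
  refine Submodule.map₂_le.1 ((Submodule.map₂_le_map₂ (f := hwMulBilin F) hp hq).trans ?_)
  rw [Submodule.map₂_span_span, Submodule.span_le]
  rintro _ ⟨_, ⟨j, rfl⟩, _, ⟨k, rfl⟩, rfl⟩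
  exact h j k

end

theorem highwater_fusion_law (h2 : ringChar F ≠ 2) (h3 : ringChar F ≠ 3) :
    (∀ x ∈ hwEig F 1, ∀ y ∈ hwEig F 1, hwMul F x y ∈ hwEig F 1) ∧
    (∀ x ∈ hwEig F 1, ∀ y ∈ hwEig F 0, hwMul F x y = 0) ∧
    (∀ x ∈ hwEig F 1, ∀ y ∈ hwEig F 2, hwMul F x y ∈ hwEig F 2) ∧
    (∀ x ∈ hwEig F 1, ∀ y ∈ hwEig F (2 : F)⁻¹, hwMul F x y ∈ hwEig F (2 : F)⁻¹) ∧
    (∀ x ∈ hwEig F 0, ∀ y ∈ hwEig F 0, hwMul F x y ∈ hwEig F 0) ∧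
    (∀ x ∈ hwEig F 0, ∀ y ∈ hwEig F 2, hwMul F x y ∈ hwEig F 2) ∧
    (∀ x ∈ hwEig F 0, ∀ y ∈ hwEig F (2 : F)⁻¹, hwMul F x y ∈ hwEig F (2 : F)⁻¹) ∧
    (∀ x ∈ hwEig F 2, ∀ y ∈ hwEig F 2, hwMul F x y ∈ hwEig F 1 ⊔ hwEig F 0) ∧
    (∀ x ∈ hwEig F 2, ∀ y ∈ hwEig F (2 : F)⁻¹, hwMul F x y ∈ hwEig F (2 : F)⁻¹) ∧
    (∀ x ∈ hwEig F (2 : F)⁻¹, ∀ y ∈ hwEig F (2 : F)⁻¹, hwMul F x y ∈ hwEig F 1 ⊔ hwEig F 0 ⊔ hwEig F 2) := by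
  have two_ne : (2 : F) ≠ 0 := Ring.two_ne_zero h2
  have three_ne : (3 : F) ≠ 0 := fun h => by
    have hdvd : ringChar F ∣ 3 := ringChar.dvd (by exact_mod_cast h)
    rcases (Nat.dvd_prime Nat.prime_three).1 hdvd with h1 | h1
    · exact CharP.ringChar_ne_one h1
    · exact h3 h1
  obtain ⟨eig_one, eig_zero, eig_two, eig_half⟩ := hwEig_le_span two_ne three_ne
  have zero_mem := hwZeroVec_mem_hwEig two_ne
  have two_mem := hwTwoVec_mem_hwEig two_ne
  have half_mem := hwHalfVec_mem_hwEig two_ne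
  have one_mul (μ : F) (x : HW F) (hx : x ∈ hwEig F 1) (y : HW F) (hy : y ∈ hwEig F μ) :
      ∃ c : F, hwMul F x y = (c * μ) • y := by
    obtain ⟨c, rfl⟩ := Submodule.mem_span_singleton.1 (eig_one hx)
    have hy' : hwMul F (hwa F 0) y = μ • y := hy
    exact ⟨c, by rw [← hwMulBilin_apply, map_smul, LinearMap.smul_apply, hwMulBilin_apply, hy',
      smul_smul]⟩
  have one_mul_mem (μ : F) (x : HW F) (hx : x ∈ hwEig F 1) (y : HW F) (hy : y ∈ hwEig F μ) :
      hwMul F x y ∈ hwEig F μ := by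
    obtain ⟨c, hc⟩ := one_mul μ x hx y hy
    exact hc ▸ Submodule.smul_mem _ _ hy
  have s_mem (j : ℤ) : hwsInt F j ∈ hwEig F 1 ⊔ hwEig F 0 ⊔ hwEig F 2 := by
    rw [hwsInt_eq two_ne]
    exact sub_mem (Submodule.smul_mem _ _ (Submodule.mem_sup_right (two_mem j)))
      (Submodule.smul_mem _ _ (Submodule.mem_sup_left (Submodule.mem_sup_right (zero_mem j))))
  refine ⟨one_mul_mem 1, fun x hx y hy => ?_, one_mul_mem 2, one_mul_mem _,
    hwMul_mem_of_le_span eig_zero eig_zero fun j k => ?_,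
    hwMul_mem_of_le_span eig_zero eig_two fun j k => ?_,
    hwMul_mem_of_le_span eig_zero eig_half fun j k => ?_,
    hwMul_mem_of_le_span eig_two eig_two fun j k => ?_,
    hwMul_mem_of_le_span eig_two eig_half fun j k => ?_,
    hwMul_mem_of_le_span eig_half eig_half fun j k => ?_⟩
  · obtain ⟨c, hc⟩ := one_mul 0 x hx y hy
    rw [hc, mul_zero, zero_smul]
  · rw [hwZeroVec_mul_hwZeroVec two_ne]
    exact add_mem (Submodule.smul_mem _ _ (add_mem (zero_mem _) (zero_mem _)))
      (Submodule.smul_mem _ _ (add_mem (zero_mem _) (zero_mem _)))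
  · rw [hwZeroVec_mul_hwTwoVec two_ne]
    exact add_mem (Submodule.smul_mem _ _ (add_mem (two_mem _) (two_mem _)))
      (Submodule.smul_mem _ _ (add_mem (two_mem _) (two_mem _)))
  · rw [hwZeroVec_mul_hwHalfVec two_ne]
    exact sub_mem (Submodule.smul_mem _ _ (half_mem _))
      (Submodule.smul_mem _ _ (add_mem (half_mem _) (half_mem _)))
  · rw [hwTwoVec_mul_hwTwoVec two_ne]
    exact Submodule.mem_sup_right
      (add_mem (Submodule.smul_mem _ _ (add_mem (zero_mem _) (zero_mem _)))
        (add_mem (zero_mem _) (zero_mem _)))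
  · rw [hwTwoVec_mul_hwHalfVec two_ne]
    exact add_mem (Submodule.smul_mem _ _ (half_mem _))
      (Submodule.smul_mem _ _ (add_mem (half_mem _) (half_mem _)))
  · rw [hwHalfVec_mul_hwHalfVec two_ne]
    exact Submodule.smul_mem _ _ (sub_mem (s_mem _) (s_mem _))
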